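/- Let φ : ℝ → ℝ be a C^∞ sigmoid (0 < φ < 1, φ′ > 0, φ(z) → 1 as z → +∞, φ(z) → 0 as z → −∞) satisfying the algebraic-decay assumption (A). Fix α ∈ (0,1), α + β > 1, μ ≥ 0 and η > 0 with η ≠ 1 + μ/α and η ≠ 1 + μ/(α+β). Then there exists ε₀ > 0 such that for every ε ∈ (0, ε₀), the planar system ẋ = (α + β φ((x−1)/ε)) y − x, ẏ = η − (μ + α + β φ((x−1)/ε)) y has no nonconstant periodic solutions, and the ω-limit set of every solution with bounded forward orbit is contained in the set of equilibria of the system. -/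

import Mathlib

open Filter Topology

/-- The substrate-depletion vector field
`(x, y) ↦ ((α + βφ((x−1)/ε))y − x, η − (μ + α + βφ((x−1)/ε))y)`. -/
noncomputable def sdVF (φ : ℝ → ℝ) (α β μ η ε : ℝ) (p : ℝ × ℝ) : ℝ × ℝ :=
  ((α + β * φ ((p.1 - 1) / ε)) * p.2 - p.1,
   η - (μ + α + β * φ ((p.1 - 1) / ε)) * p.2)
theorem hasDerivAt_sq_aux {f : ℝ → ℝ} {a t : ℝ} (h : HasDerivAt f a t) :
    HasDerivAt (fun t => f t ^ 2) (2 * f t * a) t :=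
  (h.pow 2).congr_deriv (by norm_num)

theorem stay_ge {g g' : ℝ → ℝ} {t0 a : ℝ} (hg : ∀ t, HasDerivAt g (g' t) t)
    (h0 : a ≤ g t0) (h : ∀ t ≥ t0, g t = a → 0 < g' t) : ∀ t ≥ t0, a ≤ g t := by
  intro t ht
  have := image_le_of_deriv_right_lt_deriv_boundary' (f := fun _ => a) (f' := fun _ => 0)
    (a := t0) (b := t) continuousOn_const (fun x _ => hasDerivWithinAt_const _ _ _)
    (B := g) (B' := g') h0 (fun x _ => (hg x).continuousAt.continuousWithinAt)
    (fun x _ => (hg x).hasDerivWithinAt) (fun x hx hxa => h x hx.1 hxa.symm)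
  exact this ⟨ht, le_refl _⟩

theorem barrier_ge {g g' : ℝ → ℝ} {t0 a c : ℝ} (hg : ∀ t, HasDerivAt g (g' t) t)
    (hc : 0 < c) (h : ∀ t ≥ t0, g t ≤ a → c ≤ g' t) : ∃ t1 ≥ t0, ∀ t ≥ t1, a ≤ g t := by
  by_cases hex : ∃ t1 ≥ t0, a ≤ g t1
  · obtain ⟨t1, h1, h2⟩ := hex
    exact ⟨t1, h1, stay_ge hg h2 (fun t ht hta => lt_of_lt_of_le hc (h t (le_trans h1 ht) hta.le))⟩
  · exfalso
    push Not at hex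
    have hk : ∀ t ≥ t0, g t0 - 1 ≤ g t - c / 2 * (t - t0) := by
      have hd : ∀ t, HasDerivAt (fun t => g t - c / 2 * (t - t0)) (g' t - c / 2 * 1) t :=
        fun t => (hg t).sub (((hasDerivAt_id t).sub_const t0).const_mul _)
      apply stay_ge hd
      · simp
      · intro t ht _
        have := h t ht (hex t ht).le
        linarith
    have hT : t0 + 2 / c * (a - g t0 + 1) ≥ t0 := by
      have := hex t0 le_rfl
      have : 0 ≤ 2 / c * (a - g t0 + 1) := by
        apply mul_nonneg (by positivity); linarith
      linarith
    have h1 := hk _ hT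
    have h2 := hex _ hT
    have h3 : c / 2 * (t0 + 2 / c * (a - g t0 + 1) - t0) = a - g t0 + 1 := by
      field_simp
      ring
    linarith

theorem stay_le {g g' : ℝ → ℝ} {t0 a : ℝ} (hg : ∀ t, HasDerivAt g (g' t) t)
    (h0 : g t0 ≤ a) (h : ∀ t ≥ t0, g t = a → g' t < 0) : ∀ t ≥ t0, g t ≤ a := by
  intro t ht
  have := stay_ge (g := fun t => - g t) (g' := fun t => - g' t) (a := -a) (t0 := t0)
    (fun t => (hg t).neg) (by linarith)
    (fun t ht hta => by have := h t ht (by linarith); linarith) t ht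
  linarith

theorem barrier_le {g g' : ℝ → ℝ} {t0 a c : ℝ} (hg : ∀ t, HasDerivAt g (g' t) t)
    (hc : 0 < c) (h : ∀ t ≥ t0, a ≤ g t → g' t ≤ -c) : ∃ t1 ≥ t0, ∀ t ≥ t1, g t ≤ a := by
  obtain ⟨t1, h1, h2⟩ := barrier_ge (g := fun t => - g t) (g' := fun t => - g' t) (a := -a)
    (t0 := t0) (fun t => (hg t).neg) hc
    (fun t ht hta => by have := h t ht (by linarith); linarith)
  exact ⟨t1, h1, fun t ht => by have := h2 t ht; linarith⟩

theorem decay_zero {V V' : ℝ → ℝ} {t0 c : ℝ} (hV : ∀ t, HasDerivAt V (V' t) t)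
    (hc : 0 < c) (hnn : ∀ t, 0 ≤ V t) (h : ∀ t ≥ t0, V' t ≤ -c * V t) :
    Tendsto V atTop (𝓝 0) := by
  rw [Metric.tendsto_atTop]
  intro r hr
  obtain ⟨t1, _, h2⟩ := barrier_le (g := V) (g' := V') (a := r / 2) (t0 := t0) (c := c * (r / 2)) hV
    (by positivity) (fun t ht hta => by
      have := h t ht
      have := mul_le_mul_of_nonneg_left hta hc.le
      linarith)
  refine ⟨t1, fun t ht => ?_⟩
  rw [Real.dist_eq, sub_zero, abs_of_nonneg (hnn t)]
  have := h2 t ht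
  linarith

theorem tendsto_zero_of_sq_le {u V : ℝ → ℝ} {C : ℝ} (hV : Tendsto V atTop (𝓝 0)) 
    (h : ∀ᶠ t in atTop, u t ^ 2 ≤ C * V t) : Tendsto u atTop (𝓝 0) := by
  have h1 : Tendsto (fun t => C * V t) atTop (𝓝 0) := by simpa using hV.const_mul C
  have h2 : Tendsto (fun t => u t ^ 2) atTop (𝓝 0) :=
    tendsto_of_tendsto_of_tendsto_of_le_of_le' tendsto_const_nhds h1
      (Eventually.of_forall fun t => sq_nonneg _) h
  have h3 := (Real.continuous_sqrt.tendsto 0).comp h2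
  simp only [Real.sqrt_zero] at h3
  apply (tendsto_zero_iff_abs_tendsto_zero u).2
  refine h3.congr fun t => ?_
  simp [Real.sqrt_sq_eq_abs]

theorem stable_conv {u v e P : ℝ → ℝ} {α q μ e0 t0 : ℝ} (hα : 0 < α) (hμ : 0 ≤ μ) 
    (hu : ∀ t, HasDerivAt u ((e t - 1) * u t + P t * v t) t)
    (hv : ∀ t, HasDerivAt v (-e t * u t - (μ + P t) * v t) t)
    (hq : 0 < q)
    (he1 : e0 ≤ α / 2) (he2 : (2 + 2 * q ^ 2 / α) * e0 ≤ 1 / 2)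
    (he : ∀ t ≥ t0, 0 ≤ e t ∧ e t ≤ e0) (hP : ∀ t, α ≤ P t ∧ P t ≤ q) :
    Tendsto u atTop (𝓝 0) ∧ Tendsto v atTop (𝓝 0) := by
  set B := 2 * q ^ 2 / α with hB
  have hBpos : 0 < B := by positivity
  have hBα : B * α = 2 * q ^ 2 := by rw [hB]; field_simp
  have hV : ∀ t, HasDerivAt (fun t => u t ^ 2 + B * v t ^ 2)
      (2 * u t * ((e t - 1) * u t + P t * v t) + B * (2 * v t * (-e t * u t - (μ + P t) * v t))) t := by
    intro t
    exact (hasDerivAt_sq_aux (hu t)).add ((hasDerivAt_sq_aux (hv t)).const_mul B)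
  have hc : 0 < min 1 (α / 2) := lt_min one_pos (by positivity)
  have hd := decay_zero (t0 := t0) hV hc (fun t => by positivity) (by
    intro t ht
    obtain ⟨a1, a2⟩ := he t ht
    obtain ⟨b1, b2⟩ := hP t
    have hBe : B * e t * (2 * u t * v t) ≥ - (B * e t * (u t ^ 2 + v t ^ 2)) := by
      have : 0 ≤ B * e t * (u t + v t) ^ 2 := by positivity
      nlinarith
    have hp2 : P t ^ 2 ≤ q ^ 2 := by nlinarith
    have h2 : 2 * P t * u t * v t ≤ u t ^ 2 / 2 + 2 * q ^ 2 * v t ^ 2 := by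
      nlinarith [sq_nonneg (u t - 2 * P t * v t), mul_le_mul_of_nonneg_right hp2 (sq_nonneg (v t))]
    have h3 : (μ + P t) * (B * v t ^ 2) ≥ α * (B * v t ^ 2) :=
      mul_le_mul_of_nonneg_right (by linarith) (by positivity)
    have h4 : e t * (B * v t ^ 2) ≤ α / 2 * (B * v t ^ 2) :=
      mul_le_mul_of_nonneg_right (by linarith) (by positivity)
    have h5 : (2 + B) * e t ≤ 1 / 2 := 
      le_trans (mul_le_mul_of_nonneg_left a2 (by positivity)) he2
    have h6 := mul_le_mul_of_nonneg_right h5 (sq_nonneg (u t))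
    have h7 : min 1 (α / 2) * u t ^ 2 ≤ 1 * u t ^ 2 :=
      mul_le_mul_of_nonneg_right (min_le_left _ _) (by positivity)
    have h8 : min 1 (α / 2) * (B * v t ^ 2) ≤ α / 2 * (B * v t ^ 2) :=
      mul_le_mul_of_nonneg_right (min_le_right _ _) (by positivity)
    have h9 : 2 * q ^ 2 * v t ^ 2 = α * (B * v t ^ 2) := by rw [← hBα]; ring
    nlinarith)
  constructor
  · exact tendsto_zero_of_sq_le (C := 1) hd (Eventually.of_forall fun t => by
      have : 0 ≤ B * v t ^ 2 := by positivity
      linarith)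
  · exact tendsto_zero_of_sq_le (C := 1 / B) hd (Eventually.of_forall fun t => by
      have h1 : 1 / B * (u t ^ 2 + B * v t ^ 2) = 1 / B * u t ^ 2 + v t ^ 2 := by
        field_simp
      have : 0 ≤ 1 / B * u t ^ 2 := by positivity
      linarith)

theorem saddle_conv {u w A P : ℝ → ℝ} {q μ t0 θ G Cb : ℝ} (hμ : 0 < μ) (hθ : 0 < θ)
    (hθ2 : θ * |1 - μ| ≤ μ / 2) 
    (hu : ∀ t, HasDerivAt u (A t * u t + P t * w t) t)
    (hw : ∀ t, HasDerivAt w (-(1 - μ) * u t - μ * w t) t)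
    (hG : G = q + θ ^ 2 * (1 + μ))
    (hA : ∀ t ≥ t0, G ^ 2 / θ ^ 2 ≤ 2 * A t - 1)
    (hP : ∀ t, 0 < P t ∧ P t ≤ q) (hb : ∀ t ≥ t0, u t ^ 2 ≤ Cb) :
    Tendsto u atTop (𝓝 0) ∧ Tendsto w atTop (𝓝 0) := by
  have hQ : ∀ t, HasDerivAt (fun t => u t ^ 2 - θ ^ 2 * w t ^ 2)
      (2 * u t * (A t * u t + P t * w t) - θ ^ 2 * (2 * w t * (-(1 - μ) * u t - μ * w t))) t := by
    intro t
    exact (hasDerivAt_sq_aux (hu t)).sub ((hasDerivAt_sq_aux (hw t)).const_mul (θ ^ 2))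
  have hQ' : ∀ t ≥ t0, u t ^ 2 - θ ^ 2 * w t ^ 2 ≤
      2 * u t * (A t * u t + P t * w t) - θ ^ 2 * (2 * w t * (-(1 - μ) * u t - μ * w t)) := by
    intro t ht
    obtain ⟨b1, b2⟩ := hP t
    have h1 := mul_le_mul_of_nonneg_right (hA t ht) (sq_nonneg (u t))
    set H := P t + θ ^ 2 * (1 - μ) with hH
    have hθs : 0 < θ ^ 2 := by positivity
    have hHG : H ^ 2 ≤ G ^ 2 := by
      apply sq_le_sq'
      · rw [hG, hH]; nlinarith
      · rw [hG, hH]; nlinarith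
    have h2 : 0 ≤ H ^ 2 / θ ^ 2 * u t ^ 2 + 2 * H * u t * w t + θ ^ 2 * w t ^ 2 := by
      have : H ^ 2 / θ ^ 2 * u t ^ 2 + 2 * H * u t * w t + θ ^ 2 * w t ^ 2
        = (H / θ * u t + θ * w t) ^ 2 := by field_simp; ring
      rw [this]; positivity
    have h3 : H ^ 2 / θ ^ 2 * u t ^ 2 ≤ G ^ 2 / θ ^ 2 * u t ^ 2 := by gcongr
    have h4 : 0 ≤ μ * (θ ^ 2 * w t ^ 2) := by positivity
    rw [hH] at h2 h3
    nlinarith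
  have hQ0 : ∀ t ≥ t0, u t ^ 2 - θ ^ 2 * w t ^ 2 ≤ 0 := by
    intro t1 ht1
    by_contra hcon
    push Not at hcon
    have hst := stay_ge (t0 := t1) hQ (le_refl _) (fun t ht hta =>
      lt_of_lt_of_le (by rw [hta]; exact hcon) (hQ' t (le_trans ht1 ht)))
    obtain ⟨t2, h2, h3⟩ := barrier_ge (t0 := t1) (a := Cb + 1) hQ hcon (fun t ht _ => 
      le_trans (hst t ht) (hQ' t (le_trans ht1 ht)))
    have h4 := h3 t2 le_rfl
    have h5 := hb t2 (le_trans ht1 h2)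
    have : 0 ≤ θ ^ 2 * w t2 ^ 2 := by positivity
    linarith
  have hW : ∀ t, HasDerivAt (fun t => w t ^ 2) (2 * w t * (-(1 - μ) * u t - μ * w t)) t := by
    intro t
    exact hasDerivAt_sq_aux (hw t)
  have hd := decay_zero (t0 := t0) hW hμ (fun t => by positivity) (by
    intro t ht
    have h1 : |u t| ≤ θ * |w t| := by
      apply abs_le_of_sq_le_sq' _ (by positivity) |> abs_le.2 
      rw [mul_pow, sq_abs]
      have := hQ0 t ht
      linarith
    have h2 : -((1 - μ) * (u t * w t)) ≤ |1 - μ| * (|u t| * |w t|) := by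
      rw [← abs_mul, ← abs_mul]; exact neg_le_abs _
    have h3 : |1 - μ| * (|u t| * |w t|) ≤ |1 - μ| * (θ * |w t| * |w t|) := by gcongr
    have h4 : |1 - μ| * (θ * |w t| * |w t|) = θ * |1 - μ| * w t ^ 2 := by
      rw [← sq_abs (w t)]; ring
    have h5 := mul_le_mul_of_nonneg_right hθ2 (sq_nonneg (w t))
    nlinarith)
  constructor
  · exact tendsto_zero_of_sq_le (C := θ ^ 2) hd ((eventually_ge_atTop t0).mono fun t ht => by
      have := hQ0 t ht
      linarith)
  · exact tendsto_zero_of_sq_le (C := 1) hd (Eventually.of_forall fun t => by simp)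

/-- eventual bounds on y -/
theorem y_ge {y P : ℝ → ℝ} {q μ η a t0 : ℝ} (hμ : 0 ≤ μ)
    (hy : ∀ t, HasDerivAt y (η - (μ + P t) * y t) t) (hP : ∀ t, 0 < P t ∧ P t ≤ q)
    (ha0 : 0 < a) (ha : (μ + q) * a < η) : ∃ t1 ≥ t0, ∀ t ≥ t1, a ≤ y t := by
  apply barrier_ge (c := η - (μ + q) * a) hy (by linarith)
  intro t _ hta
  obtain ⟨b1, b2⟩ := hP t
  have h1 : (μ + P t) * y t ≤ (μ + P t) * a := mul_le_mul_of_nonneg_left hta (by linarith)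
  have h2 : (μ + P t) * a ≤ (μ + q) * a := by gcongr
  linarith

theorem y_le {y P : ℝ → ℝ} {α μ η a t0 : ℝ} (hμ : 0 ≤ μ) (hα : 0 < α)
    (hy : ∀ t, HasDerivAt y (η - (μ + P t) * y t) t) (hP : ∀ t, α ≤ P t)
    (ha0 : 0 < a) (ha : η < (μ + α) * a) : ∃ t1 ≥ t0, ∀ t ≥ t1, y t ≤ a := by
  apply barrier_le (c := (μ + α) * a - η) hy (by linarith)
  intro t _ hta
  have b1 := hP t
  have h1 : (μ + P t) * a ≤ (μ + P t) * y t := mul_le_mul_of_nonneg_left hta (by linarith)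
  have h2 : (μ + α) * a ≤ (μ + P t) * a := by gcongr
  linarith

theorem not_left {x y P : ℝ → ℝ} {α μ η δ t0 : ℝ} (hμ : 0 ≤ μ) (hα : 0 < α)
    (hx : ∀ t, HasDerivAt x (P t * y t - x t) t)
    (hy : ∀ t, HasDerivAt y (η - (μ + P t) * y t) t) (hP : ∀ t, α ≤ P t)
    (hy0 : ∀ t ≥ t0, 0 ≤ y t) (hδ : 0 < δ) 
    (h1 : 0 < η - (1 - μ) * (1 + δ) - μ * ((1 + δ) * (1 + 1 / α) + δ))
    (h2 : (1 + δ) * (μ + α) < α * η)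
    (hl : ∀ t ≥ t0, x t ≤ 1 + δ) : False := by
  have hαy : ∀ t ≥ t0, α * y t ≤ P t * y t := fun t ht =>
    mul_le_mul_of_nonneg_right (hP t) (hy0 t ht)
  rcases le_or_gt μ 1 with hm | hm
  · have hs : ∀ t, HasDerivAt (fun t => x t + y t) (P t * y t - x t + (η - (μ + P t) * y t)) t :=
      fun t => (hx t).add (hy t)
    obtain ⟨t1, ht1, hs1⟩ := barrier_ge (t0 := t0) (a := (1 + δ) * (1 + 1 / α) + δ) hs h1 (by
      intro t ht hta
      have := hl t ht
      have e1 := mul_le_mul_of_nonneg_left this (by linarith : 0 ≤ 1 - μ)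
      have e2 := mul_le_mul_of_nonneg_left hta hμ
      linarith)
    obtain ⟨t2, ht2, hs2⟩ := barrier_ge (t0 := t1) (a := 1 + δ + 1) (c := α * δ) hx (by positivity) (by
      intro t ht _
      have e0 := hαy t (by linarith)
      have e1 := mul_le_mul_of_nonneg_left (hs1 t ht) hα.le
      have e2 := hl t (by linarith)
      have e3 := mul_le_mul_of_nonneg_left e2 (by linarith : 0 ≤ 1 + α)
      have e4 : α * ((1 + δ) * (1 + 1 / α) + δ) = (1 + δ) * (1 + α) + α * δ := by
        field_simp; ring
      linarith)
    have := hs2 t2 le_rfl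
    have := hl t2 (by linarith)
    linarith
  · have h2' : (1 + δ) * (μ + α) / α < η := by
      rw [div_lt_iff₀ hα]; linarith
    obtain ⟨A, hA1, hA2⟩ := exists_between h2'
    rw [div_lt_iff₀ hα] at hA1
    have hden : 0 < μ + α - 1 := by linarith
    set c := α / (μ + α - 1) with hc
    have hcpos : 0 < c := by positivity
    have hc1 : c ≤ 1 := by rw [hc, div_le_one hden]; linarith
    have hceq : c * (μ + α - 1) = α := by rw [hc]; field_simp
    have hs : ∀ t, HasDerivAt (fun t => x t + c * y t)
        (P t * y t - x t + c * (η - (μ + P t) * y t)) t :=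
      fun t => (hx t).add ((hy t).const_mul c)
    obtain ⟨t1, ht1, hs1⟩ := barrier_ge (t0 := t0) (a := c * A) (c := c * (η - A)) hs
      (mul_pos hcpos (by linarith)) (by
      intro t ht hta
      have e1 : 0 ≤ (1 - c) * (P t - α) * y t :=
        mul_nonneg (mul_nonneg (by linarith) (by linarith [hP t])) (hy0 t ht)
      have e2 : P t * y t - x t + c * (η - (μ + P t) * y t) =
        -(x t + c * y t) + c * η + (1 - c) * (P t - α) * y t := by
        linear_combination (-y t) * hceq
      rw [e2]; linarith)
    obtain ⟨t2, ht2, hs2⟩ := barrier_ge (t0 := t1) (a := 1 + δ + 1)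
        (c := A * α - (1 + δ) * (μ + α)) hx (by linarith) (by
      intro t ht _
      have e0 := hαy t (by linarith)
      have e2 := hl t (by linarith)
      have e1 := mul_le_mul_of_nonneg_left (hs1 t ht) hden.le
      have e3 := mul_le_mul_of_nonneg_left e2 (by linarith : 0 ≤ μ + α)
      have e4 : (μ + α - 1) * (x t + c * y t) = (μ + α - 1) * x t + α * y t := by
        linear_combination (y t) * hceq
      have e5 : (μ + α - 1) * (c * A) = α * A := by
        linear_combination A * hceq
      rw [e4, e5] at e1
      linarith)
    have := hs2 t2 le_rfl
    have := hl t2 (by linarith)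
    linarith

theorem not_right {x y P : ℝ → ℝ} {q μ η δ t0 : ℝ} (hμ : 0 ≤ μ) (hq : 1 < q)
    (hx : ∀ t, HasDerivAt x (P t * y t - x t) t)
    (hy : ∀ t, HasDerivAt y (η - (μ + P t) * y t) t) (hP : ∀ t, P t ≤ q)
    (hy0 : ∀ t ≥ t0, 0 ≤ y t) (hδ : 0 < δ)
    (h1 : η - (1 - μ) * (1 - δ) - μ * ((1 - δ) * (1 + 1 / q) - δ) < 0)
    (h2 : q * η < (1 - δ) * (μ + q))
    (hl : ∀ t ≥ t0, 1 - δ ≤ x t) : False := by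
  have hq0 : 0 < q := by linarith
  have hαy : ∀ t ≥ t0, P t * y t ≤ q * y t := fun t ht =>
    mul_le_mul_of_nonneg_right (hP t) (hy0 t ht)
  rcases le_or_gt μ 1 with hm | hm
  · have hs : ∀ t, HasDerivAt (fun t => x t + y t) (P t * y t - x t + (η - (μ + P t) * y t)) t :=
      fun t => (hx t).add (hy t)
    obtain ⟨t1, ht1, hs1⟩ := barrier_le (t0 := t0) (a := (1 - δ) * (1 + 1 / q) - δ) hs
      (neg_pos.2 h1) (by
      intro t ht hta
      have := hl t ht
      have e1 := mul_le_mul_of_nonneg_left this (by linarith : 0 ≤ 1 - μ)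
      have e2 := mul_le_mul_of_nonneg_left hta hμ
      linarith)
    obtain ⟨t2, ht2, hs2⟩ := barrier_le (t0 := t1) (a := 1 - δ - 1) (c := q * δ) hx (by positivity) (by
      intro t ht _
      have e0 := hαy t (by linarith)
      have e1 := mul_le_mul_of_nonneg_left (hs1 t ht) hq0.le
      have e2 := hl t (by linarith)
      have e3 := mul_le_mul_of_nonneg_left e2 (by linarith : 0 ≤ 1 + q)
      have e4 : q * ((1 - δ) * (1 + 1 / q) - δ) = (1 - δ) * (1 + q) - q * δ := by
        field_simp; ring
      linarith)
    have := hs2 t2 le_rfl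
    have := hl t2 (by linarith)
    linarith
  · have h2' : η < (1 - δ) * (μ + q) / q := by
      rw [lt_div_iff₀ hq0]; linarith
    obtain ⟨A, hA2, hA1⟩ := exists_between h2'
    rw [lt_div_iff₀ hq0] at hA1
    have hden : 0 < μ + q - 1 := by linarith
    set c := q / (μ + q - 1) with hc
    have hcpos : 0 < c := by positivity
    have hc1 : c ≤ 1 := by rw [hc, div_le_one hden]; linarith
    have hceq : c * (μ + q - 1) = q := by rw [hc]; field_simp
    have hs : ∀ t, HasDerivAt (fun t => x t + c * y t)
        (P t * y t - x t + c * (η - (μ + P t) * y t)) t :=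
      fun t => (hx t).add ((hy t).const_mul c)
    obtain ⟨t1, ht1, hs1⟩ := barrier_le (t0 := t0) (a := c * A) (c := c * (A - η)) hs
      (mul_pos hcpos (by linarith)) (by
      intro t ht hta
      have e1 : 0 ≤ (1 - c) * (q - P t) * y t :=
        mul_nonneg (mul_nonneg (by linarith) (by linarith [hP t])) (hy0 t ht)
      have e2 : P t * y t - x t + c * (η - (μ + P t) * y t) =
        -(x t + c * y t) + c * η - (1 - c) * (q - P t) * y t := by
        linear_combination (-y t) * hceq
      rw [e2]; linarith)
    obtain ⟨t2, ht2, hs2⟩ := barrier_le (t0 := t1) (a := 1 - δ - 1)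
        (c := (1 - δ) * (μ + q) - A * q) hx (by linarith) (by
      intro t ht _
      have e0 := hαy t (by linarith)
      have e2 := hl t (by linarith)
      have e1 := mul_le_mul_of_nonneg_left (hs1 t ht) hden.le
      have e3 := mul_le_mul_of_nonneg_left e2 (by linarith : 0 ≤ μ + q)
      have e4 : (μ + q - 1) * (x t + c * y t) = (μ + q - 1) * x t + q * y t := by
        linear_combination (y t) * hceq
      have e5 : (μ + q - 1) * (c * A) = q * A := by
        linear_combination A * hceq
      rw [e4, e5] at e1
      linarith)
    have := hs2 t2 le_rfl
    have := hl t2 (by linarith)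
    linarith

theorem decay_deriv {φ φR : ℝ → ℝ} {k : ℕ} (hφR : ContDiff ℝ (⊤ : ℕ∞) φR)
    (hAR : ∀ z : ℝ, 0 < z → φ z = 1 - (z ^ k)⁻¹ * φR z⁻¹) :
    Tendsto (fun z => z * deriv φ z) atTop (𝓝 0) := by
  set G : ℝ → ℝ := fun u => u ^ k * φR u with hG
  have hGc : ContDiff ℝ (⊤ : ℕ∞) G := (contDiff_id.pow k).mul hφR
  have hGd : Differentiable ℝ G := hGc.differentiable (by simp)
  have hGcd : Continuous (deriv G) := hGc.continuous_deriv (by simp)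
  have h1 : Tendsto (fun z : ℝ => z⁻¹ * deriv G z⁻¹) atTop (𝓝 0) := by
    have h2 : Tendsto (fun u : ℝ => u * deriv G u) (𝓝 0) (𝓝 (0 * deriv G 0)) :=
      (continuous_id.mul hGcd).tendsto 0
    rw [zero_mul] at h2
    exact h2.comp tendsto_inv_atTop_zero
  refine h1.congr' ?_
  filter_upwards [eventually_gt_atTop 0] with z hz
  have h3 : φ =ᶠ[𝓝 z] fun z => 1 - G z⁻¹ := by
    filter_upwards [lt_mem_nhds hz] with w hw
    rw [hAR w hw, hG]
    simp
  have h4 : HasDerivAt (fun z => 1 - G z⁻¹) (-(deriv G z⁻¹ * (-(z ^ 2)⁻¹))) z := by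
    have h5 := (hGd z⁻¹).hasDerivAt.comp z (hasDerivAt_inv hz.ne')
    exact h5.const_sub 1
  rw [h3.deriv_eq, h4.deriv]
  field_simp

structure SDHyp (φ : ℝ → ℝ) (α β μ η : ℝ) : Prop where
  hd : ∀ z, HasDerivAt φ (deriv φ z) z
  hc : Continuous (deriv φ)
  h0 : ∀ z, 0 < φ z
  h1 : ∀ z, φ z < 1
  hpos : ∀ z, 0 < deriv φ z
  htop : Tendsto φ atTop (𝓝 1)
  hbot : Tendsto (fun z => φ (-z)) atTop (𝓝 0)
  hzR : Tendsto (fun z => z * deriv φ z) atTop (𝓝 0)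
  hzL : Tendsto (fun z => z * deriv φ (-z)) atTop (𝓝 0)
  hα : 0 < α
  hα1 : α < 1
  hβ : 0 < β
  hq : 1 < α + β
  hμ : 0 ≤ μ
  hη : 0 < η

def SDSol (φ : ℝ → ℝ) (α β μ η ε : ℝ) (x y : ℝ → ℝ) : Prop :=
  (∀ t, HasDerivAt x ((α + β * φ ((x t - 1) / ε)) * y t - x t) t) ∧
  (∀ t, HasDerivAt y (η - (μ + (α + β * φ ((x t - 1) / ε))) * y t) t)

def SDConv (φ : ℝ → ℝ) (α β μ η ε : ℝ) (x y : ℝ → ℝ) : Prop :=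
  Tendsto (fun t => (α + β * φ ((x t - 1) / ε)) * y t - x t) atTop (𝓝 0) ∧
  Tendsto (fun t => η - (μ + (α + β * φ ((x t - 1) / ε))) * y t) atTop (𝓝 0)

theorem SDHyp.P_bd {φ : ℝ → ℝ} {α β μ η : ℝ} (H : SDHyp φ α β μ η) (z : ℝ) :
    α ≤ α + β * φ z ∧ α + β * φ z ≤ α + β := by
  have h0 := H.h0 z
  have h1 := H.h1 z
  have hβ := H.hβ
  constructor <;> nlinarith

theorem SDHyp.mono {φ : ℝ → ℝ} {α β μ η : ℝ} (H : SDHyp φ α β μ η) : Monotone φ :=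
  (strictMono_of_deriv_pos H.hpos).monotone

theorem vel_deriv {φ : ℝ → ℝ} {α β μ η ε : ℝ} (H : SDHyp φ α β μ η) {x y : ℝ → ℝ}
    (hs : SDSol φ α β μ η ε x y) :
    (∀ t, HasDerivAt (fun t => (α + β * φ ((x t - 1) / ε)) * y t - x t)
      ((β * deriv φ ((x t - 1) / ε) / ε * y t - 1) * ((α + β * φ ((x t - 1) / ε)) * y t - x t)
        + (α + β * φ ((x t - 1) / ε)) * (η - (μ + (α + β * φ ((x t - 1) / ε))) * y t)) t) ∧
    (∀ t, HasDerivAt (fun t => η - (μ + (α + β * φ ((x t - 1) / ε))) * y t)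
      (-(β * deriv φ ((x t - 1) / ε) / ε * y t) * ((α + β * φ ((x t - 1) / ε)) * y t - x t)
        - (μ + (α + β * φ ((x t - 1) / ε))) * (η - (μ + (α + β * φ ((x t - 1) / ε))) * y t)) t) := by
  have hP : ∀ t, HasDerivAt (fun t => α + β * φ ((x t - 1) / ε))
      (β * (deriv φ ((x t - 1) / ε) * (((α + β * φ ((x t - 1) / ε)) * y t - x t) / ε))) t := by
    intro t
    have h1 : HasDerivAt (fun t => (x t - 1) / ε) (((α + β * φ ((x t - 1) / ε)) * y t - x t) / ε) t :=
      ((hs.1 t).sub_const 1).div_const ε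
    exact (((H.hd _).comp t h1).const_mul β).const_add α
  constructor
  · intro t
    refine (((hP t).mul (hs.2 t)).sub (hs.1 t)).congr_deriv ?_
    ring
  · intro t
    refine ((((hP t).const_add μ).mul (hs.2 t)).const_sub η).congr_deriv ?_
    ring

theorem y_bds {φ : ℝ → ℝ} {α β μ η ε : ℝ} (H : SDHyp φ α β μ η) {x y : ℝ → ℝ}
    (hs : SDSol φ α β μ η ε x y) (t0 : ℝ) :
    ∃ t1 ≥ t0, ∀ t ≥ t1, 0 < y t ∧ y t ≤ η / (μ + α) + 1 := by
  have hα := H.hα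
  have hη := H.hη
  have hμ := H.hμ
  have hq := H.hq
  have hqp : 0 < μ + (α + β) := by linarith
  obtain ⟨t1, h1, h2⟩ := y_ge (t0 := t0) (q := α + β) (a := η / (μ + (α + β)) / 2) hμ hs.2
    (fun t => ⟨lt_of_lt_of_le hα (H.P_bd _).1, (H.P_bd _).2⟩) (by positivity) (by
      have : (μ + (α + β)) * (η / (μ + (α + β)) / 2) = η / 2 := by field_simp
      rw [this]; linarith)
  obtain ⟨t2, h3, h4⟩ := y_le (t0 := t1) (a := η / (μ + α) + 1) hμ hα hs.2
    (fun t => (H.P_bd _).1) (by positivity) (by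
      have : (μ + α) * (η / (μ + α) + 1) = η + (μ + α) := by field_simp
      rw [this]; linarith)
  refine ⟨t2, by linarith, fun t ht => ⟨lt_of_lt_of_le ?_ (h2 t (by linarith)), h4 t ht⟩⟩
  positivity

theorem trap_conv {φ : ℝ → ℝ} {α β μ η : ℝ} (H : SDHyp φ α β μ η) :
    ∃ e1 > 0, ∀ ε > 0, ∀ x y : ℝ → ℝ, SDSol φ α β μ η ε x y →
      (∃ t0, ∀ t ≥ t0, β * deriv φ ((x t - 1) / ε) / ε ≤ e1) → SDConv φ α β μ η ε x y := by
  have hα := H.hα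
  have hη := H.hη
  have hμ := H.hμ
  have hβ := H.hβ
  have hM : 0 < η / (μ + α) + 1 := by positivity
  set M := η / (μ + α) + 1 with hMdef
  set D := 2 + 2 * (α + β) ^ 2 / α with hD
  have hDpos : 0 < D := by positivity
  set e0 := min (α / 2) (1 / 2 / D) with he0
  have he0pos : 0 < e0 := lt_min (by positivity) (by positivity)
  refine ⟨e0 / M, by positivity, ?_⟩
  rintro ε hε x y hs ⟨t0, ht0⟩
  obtain ⟨t1, h1, h2⟩ := y_bds H hs t0
  obtain ⟨hu, hv⟩ := vel_deriv H hs
  refine stable_conv (α := α) (q := α + β) (e0 := e0) (t0 := t1) hα hμ hu hv (by positivity)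
    (min_le_left _ _) ?_ ?_ (fun t => H.P_bd _)
  · have : D * e0 ≤ D * (1 / 2 / D) := mul_le_mul_of_nonneg_left (min_le_right _ _) hDpos.le
    have h3 : D * (1 / 2 / D) = 1 / 2 := by field_simp
    linarith
  · intro t ht
    obtain ⟨a1, a2⟩ := h2 t ht
    have a3 := ht0 t (by linarith)
    have a4 := H.hpos ((x t - 1) / ε)
    constructor
    · positivity
    · calc _ ≤ e0 / M * M := by gcongr
        _ = e0 := by field_simp

theorem div_tendsto {δ : ℝ} (hδ : 0 < δ) : Tendsto (fun ε : ℝ => δ / ε) (𝓝[>] 0) atTop := by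
  simp only [div_eq_mul_inv]
  exact tendsto_inv_nhdsGT_zero.const_mul_atTop hδ

theorem small_deriv {ψ : ℝ → ℝ} (hψ : Tendsto (fun z => z * ψ z) atTop (𝓝 0))
    {β δ e1 : ℝ} (hβ : 0 < β) (hδ : 0 < δ) (he : 0 < e1) :
    ∀ᶠ ε in 𝓝[>] (0 : ℝ), ∀ d ≥ δ, β * ψ (d / ε) / ε ≤ e1 := by
  have h1 : ∀ᶠ z in atTop, z * ψ z < e1 * δ / β :=
    hψ.eventually (gt_mem_nhds (by positivity))
  obtain ⟨Z, hZ⟩ := eventually_atTop.1 h1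
  filter_upwards [(div_tendsto hδ).eventually_ge_atTop Z, self_mem_nhdsWithin] with ε h2 hε d hd
  have hε : 0 < ε := hε
  have h3 : δ / ε ≤ d / ε := by gcongr
  have h4 := hZ (d / ε) (le_trans h2 h3)
  have hd0 : 0 < d := by linarith
  rw [lt_div_iff₀ hβ] at h4
  have h5 : d * (β * ψ (d / ε) / ε) = d / ε * ψ (d / ε) * β := by ring
  by_contra hcon
  push Not at hcon
  have h6 := mul_lt_mul_of_pos_left hcon hd0
  have h7 := mul_le_mul_of_nonneg_right hd he.le
  linarith

theorem trapR {φ : ℝ → ℝ} {α β μ η : ℝ} (H : SDHyp φ α β μ η) {δ : ℝ} (hδ : 0 < δ) :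
    ∀ᶠ ε in 𝓝[>] (0 : ℝ), ∀ x y : ℝ → ℝ, SDSol φ α β μ η ε x y →
      (∃ t0, ∀ t ≥ t0, 1 + δ ≤ x t) → SDConv φ α β μ η ε x y := by
  obtain ⟨e1, he1, h⟩ := trap_conv H
  filter_upwards [small_deriv H.hzR H.hβ hδ he1, self_mem_nhdsWithin] with ε h2 hε
  rintro x y hs ⟨t0, ht0⟩
  exact h ε hε x y hs ⟨t0, fun t ht => h2 _ (by linarith [ht0 t ht])⟩

theorem trapL {φ : ℝ → ℝ} {α β μ η : ℝ} (H : SDHyp φ α β μ η) {δ : ℝ} (hδ : 0 < δ) :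
    ∀ᶠ ε in 𝓝[>] (0 : ℝ), ∀ x y : ℝ → ℝ, SDSol φ α β μ η ε x y →
      (∃ t0, ∀ t ≥ t0, x t ≤ 1 - δ) → SDConv φ α β μ η ε x y := by
  obtain ⟨e1, he1, h⟩ := trap_conv H
  filter_upwards [small_deriv H.hzL H.hβ hδ he1, self_mem_nhdsWithin] with ε h2 hε
  rintro x y hs ⟨t0, ht0⟩
  refine h ε hε x y hs ⟨t0, fun t ht => ?_⟩
  have := h2 (1 - x t) (by linarith [ht0 t ht])
  have e : -((1 - x t) / ε) = (x t - 1) / ε := by ring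
  rwa [e] at this

/-- For η above the right critical value: eventually y ≥ Y and `x ≥ 1+δ` is forward invariant. -/
theorem stayR {φ : ℝ → ℝ} {α β μ η : ℝ} (H : SDHyp φ α β μ η) {δ Y : ℝ} (hδ : 0 < δ)
    (hY0 : 0 < Y) (hY : (μ + (α + β)) * Y < η) (hδY : 1 + δ < (α + β) * Y) :
    ∀ᶠ ε in 𝓝[>] (0 : ℝ), ∀ x y : ℝ → ℝ, SDSol φ α β μ η ε x y → ∀ t0 : ℝ,
      ∃ t1 ≥ t0, (∀ t ≥ t1, Y ≤ y t) ∧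
        ∀ t2 ≥ t1, 1 + δ ≤ x t2 → ∀ t ≥ t2, 1 + δ ≤ x t := by
  have hα := H.hα
  have h1 : Tendsto (fun ε : ℝ => (α + β * φ (δ / ε)) * Y) (𝓝[>] 0) (𝓝 ((α + β * 1) * Y)) :=
    (((H.htop.comp (div_tendsto hδ)).const_mul β).const_add α).mul_const Y
  filter_upwards [h1.eventually (lt_mem_nhds (a := 1 + δ) (by linarith))] with ε hε
  intro x y hs t0
  obtain ⟨t1, h1, h2⟩ := y_ge (t0 := t0) (q := α + β) (a := Y) H.hμ hs.2
    (fun t => ⟨lt_of_lt_of_le hα (H.P_bd _).1, (H.P_bd _).2⟩) hY0 hY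
  refine ⟨t1, h1, h2, fun t2 ht2 hx2 => stay_ge hs.1 hx2 ?_⟩
  intro t ht hxt
  rw [hxt, add_sub_cancel_left]
  have h3 := mul_le_mul_of_nonneg_left (h2 t (by linarith)) (hα.le.trans (H.P_bd (δ / ε)).1)
  linarith

theorem stayL {φ : ℝ → ℝ} {α β μ η : ℝ} (H : SDHyp φ α β μ η) {δ Y : ℝ} (hδ : 0 < δ)
    (hY0 : 0 < Y) (hY : η < (μ + α) * Y) (hδY : α * Y < 1 - δ) :
    ∀ᶠ ε in 𝓝[>] (0 : ℝ), ∀ x y : ℝ → ℝ, SDSol φ α β μ η ε x y → ∀ t0 : ℝ,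
      ∃ t1 ≥ t0, (∀ t ≥ t1, y t ≤ Y) ∧
        ∀ t2 ≥ t1, x t2 ≤ 1 - δ → ∀ t ≥ t2, x t ≤ 1 - δ := by
  have hα := H.hα
  have h1 : Tendsto (fun ε : ℝ => (α + β * φ (-(δ / ε))) * Y) (𝓝[>] 0) (𝓝 ((α + β * 0) * Y)) :=
    (((H.hbot.comp (div_tendsto hδ)).const_mul β).const_add α).mul_const Y
  filter_upwards [h1.eventually_lt_const (u := 1 - δ) (by linarith)] with ε hε
  intro x y hs t0
  obtain ⟨t1, h1, h2⟩ := y_le (t0 := t0) (a := Y) H.hμ hα hs.2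
    (fun t => (H.P_bd _).1) hY0 hY
  refine ⟨t1, h1, h2, fun t2 ht2 hx2 => stay_le hs.1 hx2 ?_⟩
  intro t ht hxt
  have e : (1 - δ - 1) / ε = -(δ / ε) := by ring
  rw [hxt, e]
  have h3 := mul_le_mul_of_nonneg_left (h2 t (by linarith)) (hα.le.trans (H.P_bd (-(δ / ε))).1)
  linarith

theorem ex_small {f : ℝ → ℝ} (hf : Continuous f) (h : 0 < f 0) : ∀ᶠ δ in 𝓝[>] (0 : ℝ), 0 < f δ :=
  (tendsto_nhdsWithin_of_tendsto_nhds (hf.tendsto 0)).eventually (lt_mem_nhds h)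

theorem exYR {q μ η : ℝ} (hq : 1 < q) (hμ : 0 ≤ μ) (h : 1 + μ / q < η) :
    ∃ Y, 0 < Y ∧ (μ + q) * Y < η ∧ 1 < q * Y := by
  have hq0 : 0 < q := by linarith
  have hqm : 0 < μ + q := by linarith
  have h1 : 1 / q < η / (μ + q) := by
    rw [div_lt_div_iff₀ hq0 hqm]
    have : (1 + μ / q) * q = q + μ := by field_simp
    nlinarith
  obtain ⟨Y, a, b⟩ := exists_between h1
  refine ⟨Y, lt_trans (by positivity) a, ?_, ?_⟩
  · rw [lt_div_iff₀ hqm] at b; linarith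
  · rw [div_lt_iff₀ hq0] at a; linarith

theorem exYL {α μ η : ℝ} (hα : 0 < α) (hμ : 0 ≤ μ) (hη : 0 < η) (h : η < 1 + μ / α) :
    ∃ Y, 0 < Y ∧ η < (μ + α) * Y ∧ α * Y < 1 := by
  have hqm : 0 < μ + α := by linarith
  have h1 : η / (μ + α) < 1 / α := by
    rw [div_lt_div_iff₀ hqm hα]
    have : (1 + μ / α) * α = α + μ := by field_simp
    nlinarith
  obtain ⟨Y, a, b⟩ := exists_between h1
  refine ⟨Y, lt_trans (by positivity) a, ?_, ?_⟩
  · rw [div_lt_iff₀ hqm] at a; linarith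
  · rw [lt_div_iff₀ hα] at b; linarith

theorem case1 {φ : ℝ → ℝ} {α β μ η : ℝ} (H : SDHyp φ α β μ η) (h : 1 + μ / α < η) :
    ∀ᶠ ε in 𝓝[>] (0 : ℝ), ∀ x y : ℝ → ℝ, SDSol φ α β μ η ε x y → SDConv φ α β μ η ε x y := by
  have hα := H.hα
  have hμ := H.hμ
  have hβ := H.hβ
  have h' : 1 + μ / (α + β) < η := by
    have : μ / (α + β) ≤ μ / α := by gcongr; linarith
    linarith
  have hα' : α + μ < α * η := by
    have : α * (1 + μ / α) = α + μ := by field_simp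
    nlinarith
  obtain ⟨Y, hY0, hY1, hY2⟩ := exYR H.hq hμ h'
  obtain ⟨δ, d1, d2, d3, hδ⟩ := ((ex_small
    (f := fun δ => η - (1 - μ) * (1 + δ) - μ * ((1 + δ) * (1 + 1 / α) + δ)) (by fun_prop) (by
      have : μ * (1 / α) = μ / α := by ring
      linarith)).and ((ex_small (f := fun δ => α * η - (1 + δ) * (μ + α)) (by fun_prop)
      (by linarith)).and ((ex_small (f := fun δ => (α + β) * Y - (1 + δ)) (by fun_prop)
      (by linarith)).and self_mem_nhdsWithin))).exists
  have hδ : 0 < δ := hδ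
  filter_upwards [trapR H hδ, stayR H hδ hY0 hY1 (by linarith)] with ε e1 e2
  intro x y hs
  obtain ⟨t1, _, h1, h2⟩ := e2 x y hs 0
  have h3 : ∃ t ≥ t1, 1 + δ ≤ x t := by
    by_contra hcon
    push Not at hcon
    exact not_left (t0 := t1) hμ hα hs.1 hs.2 (fun t => (H.P_bd _).1)
      (fun t ht => hY0.le.trans (h1 t ht)) hδ d1 (by linarith) (fun t ht => (hcon t ht).le)
  obtain ⟨t2, h3, h4⟩ := h3
  exact e1 x y hs ⟨t2, h2 t2 h3 h4⟩

theorem case2 {φ : ℝ → ℝ} {α β μ η : ℝ} (H : SDHyp φ α β μ η) (h : η < 1 + μ / (α + β)) :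
    ∀ᶠ ε in 𝓝[>] (0 : ℝ), ∀ x y : ℝ → ℝ, SDSol φ α β μ η ε x y → SDConv φ α β μ η ε x y := by
  have hα := H.hα
  have hμ := H.hμ
  have hβ := H.hβ
  have h' : η < 1 + μ / α := by
    have : μ / (α + β) ≤ μ / α := by gcongr; linarith
    linarith
  have hα' : (α + β) * η < (α + β) + μ := by
    have : (α + β) * (1 + μ / (α + β)) = (α + β) + μ := by field_simp
    nlinarith
  obtain ⟨Y, hY0, hY1, hY2⟩ := exYL hα hμ H.hη h'
  obtain ⟨δ, d1, d2, d3, hδ⟩ := ((ex_small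
    (f := fun δ => -(η - (1 - μ) * (1 - δ) - μ * ((1 - δ) * (1 + 1 / (α + β)) - δ))) (by fun_prop) (by
      have : μ * (1 / (α + β)) = μ / (α + β) := by ring
      linarith)).and ((ex_small (f := fun δ => (1 - δ) * (μ + (α + β)) - (α + β) * η)
      (by fun_prop)
      (by linarith)).and ((ex_small (f := fun δ => 1 - δ - α * Y) (by fun_prop)
      (by linarith)).and self_mem_nhdsWithin))).exists
  have hδ : 0 < δ := hδ
  filter_upwards [trapL H hδ, stayL H hδ hY0 hY1 (by linarith)] with ε e1 e2
  intro x y hs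
  obtain ⟨t1, _, h1, h2⟩ := e2 x y hs 0
  obtain ⟨t1', h1', hy⟩ := y_bds H hs t1
  have h3 : ∃ t ≥ t1', x t ≤ 1 - δ := by
    by_contra hcon
    push Not at hcon
    exact not_right (t0 := t1') (q := α + β) hμ H.hq hs.1 hs.2 (fun t => (H.P_bd _).2)
      (fun t ht => (hy t ht).1.le) hδ (by linarith) (by linarith) (fun t ht => (hcon t ht).le)
  obtain ⟨t2, h3, h4⟩ := h3
  exact e1 x y hs ⟨t2, h2 t2 (by linarith) h4⟩

theorem case3 {φ : ℝ → ℝ} {α β μ η : ℝ} (H : SDHyp φ α β μ η) (hL : η < 1 + μ / α)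
    (hR : 1 + μ / (α + β) < η) :
    ∀ᶠ ε in 𝓝[>] (0 : ℝ), ∀ x y : ℝ → ℝ, SDSol φ α β μ η ε x y → SDConv φ α β μ η ε x y := by
  have hα := H.hα
  have hβ := H.hβ
  have hμ : 0 < μ := by
    rcases H.hμ.lt_or_eq with h | h
    · exact h
    · rw [← h] at hL hR
      simp at hL hR
      linarith
  have hq0 : 0 < α + β := by linarith
  obtain ⟨Y, hY0, hY1, hY2⟩ := exYR H.hq H.hμ hR
  obtain ⟨W, hW0, hW1, hW2⟩ := exYL hα H.hμ H.hη hL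
  -- the sliding equilibrium
  obtain ⟨ys, hys⟩ : ∃ ys, ys = (η - 1) / μ := ⟨_, rfl⟩
  have hysμ : μ * ys = η - 1 := by rw [hys]; field_simp
  have hys1 : 1 < (α + β) * ys := by
    have h1 : μ < (η - 1) * (α + β) := by
      rw [← div_lt_iff₀ hq0]; linarith
    rw [← hysμ] at h1
    by_contra hc
    push Not at hc
    nlinarith
  have hys2 : α * ys < 1 := by
    have h1 : (η - 1) * α < μ := by
      rw [← lt_div_iff₀ hα]; linarith
    rw [← hysμ] at h1
    by_contra hc
    push Not at hc
    nlinarith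
  have hZ1 : Tendsto (fun z : ℝ => (α + β * φ z) * ys) atTop (𝓝 ((α + β * 1) * ys)) :=
    ((H.htop.const_mul β).const_add α).mul_const ys
  have hZ2 : Tendsto (fun z : ℝ => (α + β * φ (-z)) * ys) atTop (𝓝 ((α + β * 0) * ys)) :=
    ((H.hbot.const_mul β).const_add α).mul_const ys
  obtain ⟨Z, hZa, hZb, hZ0⟩ := ((hZ1.eventually_const_lt (u := 1) (by linarith)).and
    ((hZ2.eventually_lt_const (u := 1) (by linarith)).and (eventually_ge_atTop 0))).exists
  obtain ⟨m, hm0, hm⟩ : ∃ m > 0, ∀ z ∈ Set.Icc (-Z) Z, m ≤ deriv φ z := by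
    obtain ⟨z0, _, hz0⟩ := (isCompact_Icc (a := -Z) (b := Z)).exists_isMinOn
      ⟨0, by constructor <;> linarith⟩ H.hc.continuousOn
    exact ⟨_, H.hpos z0, fun z hz => hz0 hz⟩
  obtain ⟨Kc, hKc⟩ : ∃ Kc, Kc = |1 - μ| / μ + 2 := ⟨_, rfl⟩
  obtain ⟨δ, d1, d2, d3, d4, hδ⟩ := ((ex_small
    (f := fun δ => (α + β * φ Z) * (ys - Kc * δ) - (1 + δ)) (by fun_prop) (by linarith)).and
    ((ex_small (f := fun δ => 1 - δ - (α + β * φ (-Z)) * (ys + Kc * δ)) (by fun_prop)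
      (by linarith)).and ((ex_small (f := fun δ => (α + β) * Y - (1 + δ)) (by fun_prop)
      (by linarith)).and ((ex_small (f := fun δ => 1 - δ - α * W) (by fun_prop)
      (by linarith)).and self_mem_nhdsWithin)))).exists
  have hδ : 0 < δ := hδ
  obtain ⟨θ, hθ⟩ : ∃ θ, θ = μ / (2 * (1 + |1 - μ|)) := ⟨_, rfl⟩
  have habs := abs_nonneg (1 - μ)
  have hθ0 : 0 < θ := by rw [hθ]; positivity
  have hθ2 : θ * |1 - μ| ≤ μ / 2 := by
    have : θ * (1 + |1 - μ|) = μ / 2 := by rw [hθ]; field_simp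
    linarith
  obtain ⟨G, hG⟩ : ∃ G, G = (α + β) + θ ^ 2 * (1 + μ) := ⟨_, rfl⟩
  obtain ⟨K, hK⟩ : ∃ K, K = (1 + G ^ 2 / θ ^ 2) / 2 + (α + β) + 1 := ⟨_, rfl⟩
  filter_upwards [trapR H hδ, stayR H hδ hY0 hY1 (by linarith), trapL H hδ,
    stayL H hδ hW0 hW1 (by linarith),
    (div_tendsto (δ := β * m * Y) (by positivity)).eventually_ge_atTop K,
    self_mem_nhdsWithin] with ε e1 e2 e3 e4 e5 hε
  have hε : 0 < ε := hε
  intro x y hs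
  obtain ⟨t1, _, h1, h2⟩ := e2 x y hs 0
  obtain ⟨t2, h12, h3, h4⟩ := e4 x y hs t1
  by_cases hr : ∃ t ≥ t2, 1 + δ ≤ x t
  · obtain ⟨t, ht, hxt⟩ := hr
    exact e1 x y hs ⟨t, h2 t (by linarith) hxt⟩
  by_cases hl : ∃ t ≥ t2, x t ≤ 1 - δ
  · obtain ⟨t, ht, hxt⟩ := hl
    exact e3 x y hs ⟨t, h4 t (by linarith) hxt⟩
  push Not at hr hl
  -- trapped in the layer
  have hxb : ∀ t ≥ t2, |(1 - μ) * (x t - 1)| ≤ |1 - μ| * δ := by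
    intro t ht
    rw [abs_mul]
    gcongr
    rw [abs_le]
    constructor <;> linarith [hr t ht, hl t ht]
  have hsum : ∀ t, HasDerivAt (fun t => x t + y t) _ t := fun t => (hs.1 t).add (hs.2 t)
  have hκ : μ * ((Kc - 1) * δ) = |1 - μ| * δ + μ * δ := by
    rw [hKc]; field_simp; ring
  obtain ⟨t3, h23, h5⟩ := barrier_ge (t0 := t2) (a := 1 + ys - (Kc - 1) * δ) (c := μ * δ) hsum
    (by positivity) (by
      intro t ht hta
      have a1 := (abs_le.1 (hxb t ht)).2
      have a2 := mul_le_mul_of_nonneg_left hta hμ.le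
      linarith)
  obtain ⟨t4, h34, h6⟩ := barrier_le (t0 := t3) (a := 1 + ys + (Kc - 1) * δ) (c := μ * δ) hsum
    (by positivity) (by
      intro t ht hta
      have a1 := (abs_le.1 (hxb t (by linarith))).1
      have a2 := mul_le_mul_of_nonneg_left hta hμ.le
      linarith)
  have hyl : ∀ t ≥ t4, ys - Kc * δ ≤ y t := by
    intro t ht
    have a1 := h5 t (by linarith)
    have a2 := hr t (by linarith)
    linarith
  have hyu : ∀ t ≥ t4, y t ≤ ys + Kc * δ := by
    intro t ht
    have a1 := h6 t (by linarith)
    have a2 := hl t (by linarith)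
    linarith
  have hypos : ∀ t ≥ t4, 0 < y t := fun t ht => lt_of_lt_of_le hY0 (h1 t (by linarith))
  have hxZ : ∀ t ≥ t4, x t ≤ 1 + ε * Z := by
    intro t5 ht5
    by_contra hcon
    push Not at hcon
    have hgo : ∀ t ≥ t4, 1 + ε * Z ≤ x t → (α + β * φ Z) * (ys - Kc * δ) - (1 + δ) ≤
        (α + β * φ ((x t - 1) / ε)) * y t - x t := by
      intro t ht hxt
      have b1 : Z ≤ (x t - 1) / ε := by rw [le_div_iff₀ hε]; linarith
      have b2 := H.mono b1
      have b3 : α + β * φ Z ≤ α + β * φ ((x t - 1) / ε) := by gcongr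
      have b4 := mul_le_mul_of_nonneg_right b3 (hypos t ht).le
      have b5 := mul_le_mul_of_nonneg_left (hyl t ht) (hα.le.trans (H.P_bd Z).1)
      have b6 := hr t (by linarith)
      linarith
    have hst := stay_ge (t0 := t5) hs.1 hcon.le
      (fun t ht hxt => lt_of_lt_of_le d1 (hgo t (by linarith) hxt.ge))
    obtain ⟨t6, h56, h7⟩ := barrier_ge (t0 := t5) (a := 1 + δ) hs.1 d1
      (fun t ht _ => hgo t (by linarith) (hst t ht))
    have b1 := h7 t6 le_rfl
    have b2 := hr t6 (by linarith)
    linarith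
  have hxZ' : ∀ t ≥ t4, 1 - ε * Z ≤ x t := by
    intro t5 ht5
    by_contra hcon
    push Not at hcon
    have hgo : ∀ t ≥ t4, x t ≤ 1 - ε * Z → 
        (α + β * φ ((x t - 1) / ε)) * y t - x t ≤
          -(1 - δ - (α + β * φ (-Z)) * (ys + Kc * δ)) := by
      intro t ht hxt
      have b1 : (x t - 1) / ε ≤ -Z := by rw [div_le_iff₀ hε]; linarith
      have b2 := H.mono b1
      have b3 : α + β * φ ((x t - 1) / ε) ≤ α + β * φ (-Z) := by gcongr
      have b4 := mul_le_mul_of_nonneg_right b3 (hypos t ht).le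
      have b5 := mul_le_mul_of_nonneg_left (hyu t ht) (hα.le.trans (H.P_bd (-Z)).1)
      have b6 := hl t (by linarith)
      linarith
    have hst := stay_le (t0 := t5) hs.1 hcon.le
      (fun t ht hxt => lt_of_le_of_lt (hgo t (by linarith) hxt.le) (by linarith))
    obtain ⟨t6, h56, h7⟩ := barrier_le (t0 := t5) (a := 1 - δ) hs.1 d2
      (fun t ht _ => hgo t (by linarith) (hst t ht))
    have b1 := h7 t6 le_rfl
    have b2 := hl t6 (by linarith)
    linarith
  obtain ⟨hu, hv⟩ := vel_deriv H hs
  have hfin := saddle_conv (t0 := t4) (q := α + β) (μ := μ) (θ := θ) (G := G)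
    (u := fun t => (α + β * φ ((x t - 1) / ε)) * y t - x t)
    (w := fun t => ((α + β * φ ((x t - 1) / ε)) * y t - x t) +
      (η - (μ + (α + β * φ ((x t - 1) / ε))) * y t))
    (A := fun t => β * deriv φ ((x t - 1) / ε) / ε * y t - 1 - (α + β * φ ((x t - 1) / ε)))
    (P := fun t => α + β * φ ((x t - 1) / ε)) (Cb := ((α + β) * W + 1 + δ) ^ 2)
    hμ hθ0 hθ2
    (fun t => (hu t).congr_deriv (by ring))
    (fun t => ((hu t).add (hv t)).congr_deriv (by ring)) hG
    (by
      intro t ht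
      have b1 : m ≤ deriv φ ((x t - 1) / ε) := by
        apply hm
        constructor
        · rw [le_div_iff₀ hε]; linarith [hxZ' t ht]
        · rw [div_le_iff₀ hε]; linarith [hxZ t ht]
      have b2 : β * m * Y / ε ≤ β * deriv φ ((x t - 1) / ε) / ε * y t := by
        have b3 := h1 t (by linarith)
        have b0 := H.hpos ((x t - 1) / ε)
        calc β * m * Y / ε = β * m / ε * Y := by ring
          _ ≤ _ := by gcongr
      have b4 := (H.P_bd ((x t - 1) / ε)).2
      linarith)
    (fun t => ⟨lt_of_lt_of_le hα (H.P_bd _).1, (H.P_bd _).2⟩)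
    (by
      intro t ht
      have b1 := (H.P_bd ((x t - 1) / ε))
      have b2 := h3 t (by linarith)
      have b3 := hypos t ht
      have b4 : (α + β * φ ((x t - 1) / ε)) * y t ≤ (α + β) * W :=
        mul_le_mul b1.2 b2 b3.le hq0.le
      have b5 : 0 ≤ (α + β * φ ((x t - 1) / ε)) * y t := mul_nonneg (by linarith) b3.le
      have b6 := hl t (by linarith)
      have b7 := hr t (by linarith)
      have b8 : 0 < α * W := by positivity
      apply sq_le_sq' <;> linarith)
  refine ⟨hfin.1, ?_⟩
  have := hfin.2.sub hfin.1
  rw [sub_zero] at this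
  exact this.congr fun t => by ring


/-- Away from the critical parameter values `η = 1 + μ/α` and `η = 1 + μ/(α+β)`, for all
sufficiently small `ε > 0` the substrate-depletion oscillator has no nonconstant periodic
solutions, and the ω-limit set of every solution with bounded forward orbit consists of
equilibria. -/
theorem no_limit_cycles_away_from_boundary_node
    (φ φL φR : ℝ → ℝ) (k : ℕ) (α β μ η : ℝ)
    (hφ : ContDiff ℝ (⊤ : ℕ∞) φ)
    (hφ0 : ∀ z, 0 < φ z) (hφ1 : ∀ z, φ z < 1)
    (hφ' : ∀ z, 0 < deriv φ z)
    (hφtop : Tendsto φ atTop (nhds 1)) (hφbot : Tendsto φ atBot (nhds 0))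
    (hk : 1 ≤ k)
    (hφL : ContDiff ℝ (⊤ : ℕ∞) φL) (hφR : ContDiff ℝ (⊤ : ℕ∞) φR)
    (hφLnn : ∀ u : ℝ, 0 ≤ u → 0 ≤ φL u) (hφRnn : ∀ u : ℝ, 0 ≤ u → 0 ≤ φR u)
    (hφL0 : 0 < φL 0) (hφR0 : 0 < φR 0)
    (hAL : ∀ z : ℝ, z < 0 → φ z = ((-z) ^ k)⁻¹ * φL (-z)⁻¹)
    (hAR : ∀ z : ℝ, 0 < z → φ z = 1 - (z ^ k)⁻¹ * φR z⁻¹)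
    (hα : 0 < α) (hα1 : α < 1) (hαβ : 1 < α + β)
    (hμ : 0 ≤ μ) (hη : 0 < η)
    (hηL : η ≠ 1 + μ / α) (hηR : η ≠ 1 + μ / (α + β)) :
    ∃ ε₀ > 0, ∀ ε : ℝ, 0 < ε → ε < ε₀ →
      (∀ sol : ℝ → ℝ × ℝ,
        (∀ t, HasDerivAt sol (sdVF φ α β μ η ε (sol t)) t) →
        (∃ T > 0, ∀ t, sol (t + T) = sol t) →
        ∀ t s, sol t = sol s) ∧
      (∀ sol : ℝ → ℝ × ℝ,
        (∀ t, HasDerivAt sol (sdVF φ α β μ η ε (sol t)) t) →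
        (∃ C : ℝ, ∀ t : ℝ, 0 ≤ t → ‖sol t‖ ≤ C) →
        ∀ p : ℝ × ℝ,
          (∃ u : ℕ → ℝ, Tendsto u atTop atTop ∧
            Tendsto (fun n => sol (u n)) atTop (nhds p)) →
          sdVF φ α β μ η ε p = 0) := by
  have hβ : 0 < β := by linarith
  have hdd : Differentiable ℝ φ := hφ.differentiable (by simp)
  have H : SDHyp φ α β μ η := by
    refine ⟨fun z => (hdd z).hasDerivAt, hφ.continuous_deriv (by simp), hφ0, hφ1, hφ', hφtop,
      hφbot.comp tendsto_neg_atTop_atBot, decay_deriv hφR hAR, ?_, hα, hα1, hβ, hαβ, hμ, hη⟩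
    have h1 := decay_deriv (φ := fun z => 1 - φ (-z)) (k := k) hφL (by
      intro z hz
      have := hAL (-z) (by linarith)
      simp only [neg_neg] at this
      rw [this])
    refine h1.congr fun z => ?_
    have h2 : HasDerivAt (fun z => 1 - φ (-z)) (-(deriv φ (-z) * (-1))) z :=
      (((hdd (-z)).hasDerivAt).comp z (hasDerivAt_neg z)).const_sub 1
    rw [h2.deriv]
    ring
  have hev : ∀ᶠ ε in 𝓝[>] (0 : ℝ), ∀ x y : ℝ → ℝ,
      SDSol φ α β μ η ε x y → SDConv φ α β μ η ε x y := by
    rcases lt_or_gt_of_ne hηL with h | h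
    · rcases lt_or_gt_of_ne hηR with h' | h'
      · exact case2 H h'
      · exact case3 H h h'
    · exact case1 H h
  obtain ⟨ε₀, hε₀, hsub⟩ := mem_nhdsGT_iff_exists_Ioo_subset.1 hev
  refine ⟨ε₀, hε₀, fun ε h0 h1 => ?_⟩
  have hconv := hsub ⟨h0, h1⟩
  simp only [Set.mem_setOf_eq] at hconv
  have main : ∀ sol : ℝ → ℝ × ℝ, (∀ t, HasDerivAt sol (sdVF φ α β μ η ε (sol t)) t) →
      Tendsto (fun t => sdVF φ α β μ η ε (sol t)) atTop (𝓝 0) := by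
    intro sol hsol
    have hc := hconv (fun t => (sol t).1) (fun t => (sol t).2)
      ⟨fun t => (hasFDerivAt_fst.comp_hasDerivAt t (hsol t) :),
        fun t => ((hasFDerivAt_snd.comp_hasDerivAt t (hsol t) :)).congr_deriv (by
          simp only [sdVF, ContinuousLinearMap.coe_snd']; ring)⟩
    have := hc.1.prodMk_nhds hc.2
    refine this.congr fun t => ?_
    simp only [sdVF, add_assoc]
  constructor
  · rintro sol hsol ⟨T, hT, hper⟩
    have hz : ∀ t, sdVF φ α β μ η ε (sol t) = 0 := by
      intro t
      have hn : ∀ n : ℕ, sol (t + n * T) = sol t := by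
        intro n
        induction n with
        | zero => simp
        | succ n ih =>
          rw [← ih, ← hper (t + n * T)]
          congr 1
          push_cast
          ring
      have hlim : Tendsto (fun n : ℕ => t + n * T) atTop atTop :=
        tendsto_atTop_add_const_left _ _ (tendsto_natCast_atTop_atTop.atTop_mul_const hT)
      have h2 := (main sol hsol).comp hlim
      have h3 : Tendsto (fun n : ℕ => sdVF φ α β μ η ε (sol t)) atTop (𝓝 0) :=
        h2.congr fun n => by simp [hn n]
      exact tendsto_nhds_unique tendsto_const_nhds h3
    intro t s
    refine is_const_of_deriv_eq_zero (𝕜 := ℝ) (fun t => (hsol t).differentiableAt) (fun t => ?_) t s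
    rw [(hsol t).deriv, hz t]
  · rintro sol hsol _ p ⟨u, hu, hup⟩
    have h2 := (main sol hsol).comp hu
    have hcont : Continuous (sdVF φ α β μ η ε) := by
      have := hφ.continuous
      unfold sdVF
      fun_prop
    exact tendsto_nhds_unique ((hcont.tendsto p).comp hup) h2
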